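/- arXiv:2210.13928 — 2 statements merged into one kernel-verified Lean document; each statement's English description precedes it below -/
import Mathlib

section
/- For every integer N ≥ 1, the N×N matrices B_N and Λ_N satisfy the identity −(18/5)·B_N + (Λ_N²B_N + B_NΛ_N²) − 2Λ_N B_N Λ_N − (1/40)(Λ_N⁴B_N + B_NΛ_N⁴) + (1/10)(Λ_N³B_NΛ_N + Λ_N B_NΛ_N³) − (3/20)·Λ_N²B_NΛ_N² = 0, where 0 is the N×N zero matrix. -/
open Real

/-- `α_m = (√2/3) √((m+3)(m-1)(m-2))`. -/
noncomputable def alphaCoeff (m : ℝ) : ℝ :=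
  Real.sqrt 2 / 3 * Real.sqrt ((m + 3) * (m - 1) * (m - 2))

/-- `β_m = √((m+1) m (m-2))`. -/
noncomputable def betaCoeff (m : ℝ) : ℝ :=
  Real.sqrt ((m + 1) * m * (m - 2))

/-- The enumeration `s_1 = 0`, `s_j = j + 1` for `j ≥ 2` of `{0, 3, 4, 5, …}`,
written with `0`-based indices `i = j - 1 : Fin N`. -/
def sIdx {N : ℕ} (i : Fin N) : ℕ := if (i : ℕ) = 0 then 0 else (i : ℕ) + 2

/-- The `N × N` truncation of the semi-infinite heptadiagonal recurrence matrix of the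
orthonormal exceptional Hermite polynomials:
`(B_N)_{jk} = β_{s_j}` if `s_k = s_j + 1`, `(B_N)_{jk} = α_{s_j}` if `s_k = s_j + 3`,
symmetric, and `0` otherwise. -/
noncomputable def BMat (N : ℕ) : Matrix (Fin N) (Fin N) ℝ := fun i k =>
  if sIdx k = sIdx i + 1 then betaCoeff (sIdx i)
  else if sIdx k = sIdx i + 3 then alphaCoeff (sIdx i)
  else if sIdx i = sIdx k + 1 then betaCoeff (sIdx k)
  else if sIdx i = sIdx k + 3 then alphaCoeff (sIdx k)
  else 0

/-- `Λ_N = diag(-2 s_1, …, -2 s_N) = diag(0, -6, -8, …, -2(N+1))`. -/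
noncomputable def LamMat (N : ℕ) : Matrix (Fin N) (Fin N) ℝ :=
  Matrix.diagonal fun i => -2 * (sIdx i : ℝ)

/-- `B_N` is supported on the entries with `s_i - s_k ∈ {±1, ±3}`. -/
lemma BMat_eq_zero_or (N : ℕ) (i k : Fin N) :
    BMat N i k = 0 ∨ ((sIdx i : ℝ) - sIdx k) ^ 2 = 1 ∨ ((sIdx i : ℝ) - sIdx k) ^ 2 = 9 := by
  unfold BMat
  split_ifs with h₁ h₂ h₃ h₄
  · right; left; rw [h₁]; push_cast; ring
  · right; right; rw [h₂]; push_cast; ring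
  · right; left; rw [h₃]; push_cast; ring
  · right; right; rw [h₄]; push_cast; ring
  · exact Or.inl rfl

theorem hermite_ad_relation (N : ℕ) (hN : 1 ≤ N) :
    -(18 / 5 : ℝ) • BMat N + (LamMat N ^ 2 * BMat N + BMat N * LamMat N ^ 2)
      - (2 : ℝ) • (LamMat N * BMat N * LamMat N)
      - (1 / 40 : ℝ) • (LamMat N ^ 4 * BMat N + BMat N * LamMat N ^ 4)
      + (1 / 10 : ℝ) • (LamMat N ^ 3 * BMat N * LamMat N + LamMat N * BMat N * LamMat N ^ 3)
      - (3 / 20 : ℝ) • (LamMat N ^ 2 * BMat N * LamMat N ^ 2) = 0 := by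
  ext i k
  have key : BMat N i k * ((((sIdx i : ℝ) - sIdx k) ^ 2 - 1) *
      (((sIdx i : ℝ) - sIdx k) ^ 2 - 9)) = 0 := by
    rcases BMat_eq_zero_or N i k with h | h | h <;> simp [h]
  simp only [LamMat, Matrix.diagonal_pow, Matrix.add_apply, Matrix.sub_apply, Matrix.smul_apply,
    Matrix.diagonal_mul, Matrix.mul_diagonal, Matrix.zero_apply, Pi.pow_apply, smul_eq_mul]
  linear_combination (-2 / 5 : ℝ) * key
end

section
/- Let α = 7 and N = 7. For every real number T > 0, the 7×7 matrix M(T) with entries M(T)_{jk} = ∫_{0}^{T} L̃_j(x) L̃_k(x) e^{−x} x⁷/(x+7)² dx for 1 ≤ j, k ≤ 7 commutes with the 7×7 real symmetric pentadiagonal matrix 𝓛(T) whose entries on and above the diagonal are: 𝓛_{11} = −√7·(3T²+16T−260)/(110√2), 𝓛_{12} = −6(T+19)/55, 𝓛_{13} = √5/(11√2), 𝓛_{22} = −(11T²+32T−1232)/(66√14), 𝓛_{23} = −2√5·(T+17)/(11√7), 𝓛_{24} = 2√2/(√3·√7·√11), 𝓛_{33} = −(23T²+8T−3060)/(165√14),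 𝓛_{34} = −2√3·(T+15)/(√5·√7·√11), 𝓛_{35} = 18√2/(55√7), 𝓛_{44} = −(6T²−14T−893)/(55√14), 𝓛_{45} = −2√3·(T+13)/(√5·√7·√11), 𝓛_{46} = √13/(11√7), 𝓛_{55} = −(25T²−128T−3964)/(330√14), 𝓛_{56} = −√26·(T+11)/(√3·√5·√7·√11), 𝓛_{57} = 1/√330, 𝓛_{66} = −(13T²−104T−2100)/(330√14), 𝓛_{67} = −√26·(T+9)/55, 𝓛_{77} = 0, all other entries above the diagonal being 0, and 𝓛_{jk} = 𝓛_{kj}; that is, 𝓛(T)·M(T) = M(T)·𝓛(T). -/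
open Real MeasureTheory

/-- The generalized binomial coefficient `C(r, k) = r (r-1) ⋯ (r-k+1) / k!`. -/
noncomputable def genChoose (r : ℝ) (k : ℕ) : ℝ :=
  (∏ i ∈ Finset.range k, (r - i)) / (Nat.factorial k : ℝ)

/-- The classical Laguerre polynomials
`L_n^{(α)}(x) = Σ_{k=0}^n (-1)^k C(n+α, n-k) x^k / k!`. -/
noncomputable def laguerreP (α : ℝ) (n : ℕ) (x : ℝ) : ℝ :=
  ∑ k ∈ Finset.range (n + 1),
    (-1 : ℝ) ^ k * genChoose ((n : ℝ) + α) (n - k) * x ^ k / (Nat.factorial k : ℝ)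

/-- The exceptional Laguerre polynomials (missing degree `0`):
`L̂_n^{(α)} = -(x+α+1) L_{n-1}^{(α)} + L_{n-2}^{(α)}` for `n ≥ 1`, with `L_{-1}^{(α)} = 0`
(handled by the guard `n = 1`). -/
noncomputable def excLaguerre (α : ℝ) (n : ℕ) (x : ℝ) : ℝ :=
  if n = 0 then 0
  else -(x + α + 1) * laguerreP α (n - 1) x + (if n = 1 then 0 else laguerreP α (n - 2) x)

/-- `‖L̂_n^{(7)}‖² = ∫_0^∞ L̂_n^{(7)}(x)² e^{-x} x⁷/(x+7)² dx`. -/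
noncomputable def normSqL (n : ℕ) : ℝ :=
  ∫ x in Set.Ioi (0 : ℝ), (excLaguerre 7 n x) ^ 2 * Real.exp (-x) * x ^ 7 / (x + 7) ^ 2

/-- The normalized exceptional Laguerre polynomials `L̃_n = L̂_n^{(7)}/‖L̂_n^{(7)}‖`. -/
noncomputable def lTil (n : ℕ) (x : ℝ) : ℝ := excLaguerre 7 n x / Real.sqrt (normSqL n)

/-- `M(T)_{jk} = ∫_0^T L̃_j(x) L̃_k(x) e^{-x} x⁷/(x+7)² dx`, `1 ≤ j,k ≤ 7`. -/
noncomputable def MMat (T : ℝ) : Matrix (Fin 7) (Fin 7) ℝ := fun j k =>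
  ∫ x in (0 : ℝ)..T,
    lTil ((j : ℕ) + 1) x * lTil ((k : ℕ) + 1) x * Real.exp (-x) * x ^ 7 / (x + 7) ^ 2

/-- The commuting pentadiagonal matrix `𝓛(T)`. -/
noncomputable def LMat (T : ℝ) : Matrix (Fin 7) (Fin 7) ℝ :=
  !![-Real.sqrt 7*(3*T^2+16*T-260)/(110*Real.sqrt 2), -6*(T+19)/55,
       Real.sqrt 5/(11*Real.sqrt 2), 0, 0, 0, 0;
     -6*(T+19)/55, -(11*T^2+32*T-1232)/(66*Real.sqrt 14),
       -2*Real.sqrt 5*(T+17)/(11*Real.sqrt 7),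
       2*Real.sqrt 2/(Real.sqrt 3*Real.sqrt 7*Real.sqrt 11), 0, 0, 0;
     Real.sqrt 5/(11*Real.sqrt 2), -2*Real.sqrt 5*(T+17)/(11*Real.sqrt 7),
       -(23*T^2+8*T-3060)/(165*Real.sqrt 14),
       -2*Real.sqrt 3*(T+15)/(Real.sqrt 5*Real.sqrt 7*Real.sqrt 11),
       18*Real.sqrt 2/(55*Real.sqrt 7), 0, 0;
     0, 2*Real.sqrt 2/(Real.sqrt 3*Real.sqrt 7*Real.sqrt 11),
       -2*Real.sqrt 3*(T+15)/(Real.sqrt 5*Real.sqrt 7*Real.sqrt 11),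
       -(6*T^2-14*T-893)/(55*Real.sqrt 14),
       -2*Real.sqrt 3*(T+13)/(Real.sqrt 5*Real.sqrt 7*Real.sqrt 11),
       Real.sqrt 13/(11*Real.sqrt 7), 0;
     0, 0, 18*Real.sqrt 2/(55*Real.sqrt 7),
       -2*Real.sqrt 3*(T+13)/(Real.sqrt 5*Real.sqrt 7*Real.sqrt 11),
       -(25*T^2-128*T-3964)/(330*Real.sqrt 14),
       -Real.sqrt 26*(T+11)/(Real.sqrt 3*Real.sqrt 5*Real.sqrt 7*Real.sqrt 11),
       1/Real.sqrt 330;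
     0, 0, 0, Real.sqrt 13/(11*Real.sqrt 7),
       -Real.sqrt 26*(T+11)/(Real.sqrt 3*Real.sqrt 5*Real.sqrt 7*Real.sqrt 11),
       -(13*T^2-104*T-2100)/(330*Real.sqrt 14), -Real.sqrt 26*(T+9)/55;
     0, 0, 0, 0, 1/Real.sqrt 330, -Real.sqrt 26*(T+9)/55, 0]

open Polynomial in
/-- The real polynomial with the given list of integer coefficients, in increasing degree. -/
noncomputable def polyOfList : List ℤ → ℝ[X]
  | [] => 0
  | a :: l => C (a : ℝ) + X * polyOfList l

/-- The coefficients of the polynomial `n! L̂_{n+1}^{(7)}` for `n < 7`. -/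
def excCoeffs : ℕ → List ℤ
  | 0 => [-8, -1]
  | 1 => [-63, 0, 1]
  | 2 => [-560, 70, 10, -1]
  | 3 => [-5544, 1386, 33, -22, 1]
  | 4 => [-60480, 22680, -1200, -312, 36, -1]
  | 5 => [-720720, 360360, -42900, -2860, 845, -52, 1]
  | 6 => [-9313920, 5821200, -1053360, 9240, 15960, -1722, 70, -1]
  | _ => []

/-- The coefficients of the polynomial `Q` for which `Q(x) e^{-x} / (x + 7)` is a primitive of
`j! L̂_{j+1}^{(7)} k! L̂_{k+1}^{(7)} e^{-x} x^7 / (x + 7)^2`, for `j, k < 7`. -/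
def excPrimCoeffs : ℕ → ℕ → List ℤ
  | 0, 0 =>
    [-40320, -46080, -25920, -9600, -2640, -576, -104, -16, -1]
  | 0, 1 | 1, 0 =>
    [0, 0, 0, 0, 0, 0, 0, 0, 9, 1]
  | 0, 2 | 2, 0 =>
    [0, 0, 0, 0, 0, 0, 0, 0, 80, 0, -1]
  | 0, 3 | 3, 0 =>
    [0, 0, 0, 0, 0, 0, 0, 0, 792, -88, -11, 1]
  | 0, 4 | 4, 0 =>
    [0, 0, 0, 0, 0, 0, 0, 0, 8640, -1920, -36, 24, -1]
  | 0, 5 | 5, 0 =>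
    [0, 0, 0, 0, 0, 0, 0, 0, 102960, -34320, 1716, 364, -39, 1]
  | 0, 6 | 6, 0 =>
    [0, 0, 0, 0, 0, 0, 0, 0, 1330560, -591360, 64680, 3360, -980, 56, -1]
  | 1, 1 =>
    [-317520, -362880, -204120, -75600, -20790, -4536, -819, -126, 54, -2, -1]
  | 1, 2 | 2, 1 =>
    [0, 0, 0, 0, 0, 0, 0, 0, 630, -70, -7, 1]
  | 1, 3 | 3, 1 =>
    [0, 0, 0, 0, 0, 0, 0, 0, 6237, -1386, 0, 18, -1]
  | 1, 4 | 4, 1 =>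
    [0, 0, 0, 0, 0, 0, 0, 0, 68040, -22680, 1512, 216, -31, 1]
  | 1, 5 | 5, 1 =>
    [0, 0, 0, 0, 0, 0, 0, 0, 810810, -360360, 45045, 1170, -650, 46, -1]
  | 1, 6 | 6, 1 =>
    [0, 0, 0, 0, 0, 0, 0, 0, 10478160, -5821200, 1047816, -34776, -10794, 1386, -63, 1]
  | 2, 2 =>
    [-5644800, -6451200, -3628800, -1344000, -369600, -80640, -14560, -2240, 5300, -1280, 4, 16,
     -1]
  | 2, 3 | 3, 2 =>
    [0, 0, 0, 0, 0, 0, 0, 0, 55440, -18480, 1386, 166, -27, 1]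
  | 2, 4 | 4, 2 =>
    [0, 0, 0, 0, 0, 0, 0, 0, 604800, -268800, 36120, 480, -500, 40, -1]
  | 2, 5 | 5, 2 =>
    [0, 0, 0, 0, 0, 0, 0, 0, 7207200, -4004000, 760760, -33800, -7150, 1070, -55, 1]
  | 2, 6 | 6, 2 =>
    [0, 0, 0, 0, 0, 0, 0, 0, 93139200, -62092800, 15135120, -1347360, -65100, 23520, -1960, 72, -1]
  | 3, 3 =>
    [-167650560, -191600640, -107775360, -39916800, -10977120, -2395008, -432432, -66528, 539946,
     -244992, 33429, 306, -458, 38, -1]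
  | 3, 4 | 4, 3 =>
    [0, 0, 0, 0, 0, 0, 0, 0, 5987520, -3326400, 648648, -32184, -5784, 936, -51, 1]
  | 3, 5 | 5, 3 =>
    [0, 0, 0, 0, 0, 0, 0, 0, 71351280, -47567520, 11891880, -1132560, -40755, 18678, -1672, 66, -1]
  | 3, 6 | 6, 3 =>
    [0, 0, 0, 0, 0, 0, 0, 0, 922078080, -717171840, 217712880, -29438640, 693000, 316008, -44814,
     2750, -83, 1]
  | 4, 4 =>
    [-7315660800, -8360755200, -4702924800, -1741824000, -479001600, -104509440, -18869760,
     -2903040, 64929600, -43591680, 10972224, -1067904, -34416, 17280, -1584, 64, -1]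
  | 4, 5 | 5, 4 =>
    [0, 0, 0, 0, 0, 0, 0, 0, 778377600, -605404800, 185945760, -25777440, 719160, 265560, -39540,
     2516, -79, 1]
  | 4, 6 | 6, 4 =>
    [0, 0, 0, 0, 0, 0, 0, 0, 10059033600, -8941363200, 3227273280, -570447360, 39231360, 3024000,
     -866880, 79488, -3816, 96, -1]
  | 5, 5 =>
    [-435891456000, -498161664000, -280215936000, -103783680000, -28540512000, -6227020800,
     -1124323200, -172972800, 9252500400, -8247782400, 2988534120, -532743120, 37474970,
     2711080, -809395, 75394, -3674, 94, -1]
  | 5, 6 | 6, 5 =>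
    [0, 0, 0, 0, 0, 0, 0, 0, 119870150400, -119870150400, 49945896000, -10767556800, 1127926800,
     -2938320, -14710080, 1980000, -134430, 5230, -111, 1]
  | 6, 6 =>
    [-33798352896000, -38626689024000, -21727512576000, -8047226880000, -2212987392000,
     -482833612800, -87178291200, -13412044800, 1547294918400, -1721425305600, 811098731520,
     -204927045120, 27925269120, -1298949120, -208877760, 44863104, -4099404, 219264, -7076,
     128, -1]
  | _, _ => []

open Polynomial in
/-- The polynomial `n! L̂_{n+1}^{(7)}` for `n < 7`. -/
noncomputable def excPoly (n : ℕ) : ℝ[X] := polyOfList (excCoeffs n)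

open Polynomial in
/-- The polynomial `Q` for which `Q(x) e^{-x} / (x + 7)` is a primitive of
`excPoly j * excPoly k * e^{-x} x^7 / (x + 7)^2`, for `j, k < 7`. -/
noncomputable def excPrim (j k : ℕ) : ℝ[X] := polyOfList (excPrimCoeffs j k)

/-- The squared norm of `excPoly n`. -/
noncomputable def excNormSq (n : ℕ) : ℝ := (n + 8) * (n + 6).factorial * n.factorial

/-- `330 √14` times the conjugate of `LMat` acting on the unnormalized polynomials `excPoly`. -/
noncomputable def excLMat (T : ℝ) : Matrix (Fin 7) (Fin 7) ℝ :=
  !![-63 * T ^ 2 - 336 * T + 5460, -48 * T - 912, 15, 0, 0, 0, 0;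
     -378 * T - 7182, -55 * T ^ 2 - 160 * T + 6160, -45 * T - 765, 10, 0, 0, 0;
     2100, -800 * T - 13600, -46 * T ^ 2 - 16 * T + 6120, -40 * T - 600, 6, 0, 0;
     0, 5280, -1188 * T - 17820, -36 * T ^ 2 + 84 * T + 5358, -33 * T - 429, 3, 0;
     0, 0, 7776, -1440 * T - 18720, -25 * T ^ 2 + 128 * T + 3964, -24 * T - 264, 1;
     0, 0, 0, 7800, -1430 * T - 15730, -13 * T ^ 2 + 104 * T + 2100, -13 * T - 117;
     0, 0, 0, 0, 4620, -1008 * T - 9072, 0]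

lemma eval_polyOfList (l : List ℤ) (x : ℝ) :
    (polyOfList l).eval x = l.foldr (fun (a : ℤ) (y : ℝ) => (a : ℝ) + x * y) 0 := by
  induction l with
  | nil => simp [polyOfList]
  | cons a l ih => simp [polyOfList, ih]

lemma excLaguerre_seven_eq (j : Fin 7) (x : ℝ) :
    excLaguerre 7 ((j : ℕ) + 1) x = (excPoly j).eval x / (j : ℕ).factorial := by
  fin_cases j <;>
    simp [excLaguerre, laguerreP, genChoose, excPoly, excCoeffs, polyOfList, Finset.sum_range_succ,
      Finset.prod_range_succ, Nat.factorial] <;>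
    ring

lemma excPrim_comm (j k : Fin 7) : excPrim j k = excPrim k j := by
  fin_cases j <;> fin_cases k <;> rfl

set_option maxHeartbeats 4000000 in
open Polynomial in
lemma excPrim_ode_of_le (j k : Fin 7) (h : j ≤ k) (x : ℝ) :
    ((X + 7) * (derivative (excPrim j k) - excPrim j k) - excPrim j k).eval x =
      (excPoly j).eval x * (excPoly k).eval x * x ^ 7 := by
  fin_cases j <;> fin_cases k <;> first
    | exact absurd h (by decide)
    | (simp [excPrim, excPoly, excPrimCoeffs, excCoeffs, polyOfList]; ring)

open Polynomial in
lemma excPrim_ode (j k : Fin 7) (x : ℝ) :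
    ((X + 7) * (derivative (excPrim j k) - excPrim j k) - excPrim j k).eval x =
      (excPoly j).eval x * (excPoly k).eval x * x ^ 7 := by
  rcases le_total j k with h | h
  · exact excPrim_ode_of_le j k h x
  · rw [excPrim_comm, mul_comm ((excPoly j).eval x)]
    exact excPrim_ode_of_le k j h x

lemma excPrim_eval_zero (j k : Fin 7) :
    (excPrim j k).eval 0 = if j = k then -7 * excNormSq j else 0 := by
  fin_cases j <;> fin_cases k <;>
    simp [excPrim, excPrimCoeffs, polyOfList, excNormSq, Nat.factorial] <;> norm_num

lemma excNormSq_pos (n : ℕ) : 0 < excNormSq n := by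
  unfold excNormSq
  positivity

open Polynomial in
lemma hasDerivAt_eval_mul_exp_neg_div (Q : ℝ[X]) {x : ℝ} (hx : 0 ≤ x) :
    HasDerivAt (fun y => Q.eval y * exp (-y) / (y + 7))
      (((X + 7) * (derivative Q - Q) - Q).eval x * exp (-x) / (x + 7) ^ 2) x := by
  have hx7 : x + 7 ≠ 0 := by positivity
  have hexp : HasDerivAt (fun y : ℝ => exp (-y)) (-exp (-x)) x := by
    simpa using (hasDerivAt_neg x).exp
  refine HasDerivAt.congr_deriv
    (((Q.hasDerivAt x).fun_mul hexp).fun_div ((hasDerivAt_id' x).add_const 7) hx7) ?_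
  simp
  ring

open Polynomial in
lemma tendsto_eval_mul_exp_neg_div (Q : ℝ[X]) :
    Filter.Tendsto (fun y : ℝ => Q.eval y * exp (-y) / (y + 7)) Filter.atTop (nhds 0) := by
  have h := Q.tendsto_div_exp_atTop.mul
    (tendsto_inv_atTop_zero.comp (Filter.tendsto_atTop_add_const_right _ (7 : ℝ) Filter.tendsto_id))
  rw [mul_zero] at h
  refine h.congr fun y => ?_
  simp [exp_neg, div_eq_mul_inv]

lemma hasDerivAt_excPrim (j k : Fin 7) {x : ℝ} (hx : 0 ≤ x) :
    HasDerivAt (fun y => (excPrim j k).eval y * exp (-y) / (y + 7))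
      ((excPoly j).eval x * (excPoly k).eval x * exp (-x) * x ^ 7 / (x + 7) ^ 2) x := by
  convert hasDerivAt_eval_mul_exp_neg_div (excPrim j k) hx using 1
  rw [excPrim_ode]
  ring

lemma normSqL_eq (j : Fin 7) :
    normSqL ((j : ℕ) + 1) = excNormSq j / ((j : ℕ).factorial : ℝ) ^ 2 := by
  have h := integral_Ioi_of_hasDerivAt_of_nonneg'
    (fun x (hx : x ∈ Set.Ici (0 : ℝ)) => hasDerivAt_excPrim j j hx)
    (fun x (hx : 0 < x) => by
      have := mul_self_nonneg ((excPoly j).eval x)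
      positivity)
    (tendsto_eval_mul_exp_neg_div _)
  rw [excPrim_eval_zero] at h
  simp only [if_true, neg_zero, exp_zero] at h
  have h' : excNormSq j = ∫ x in Set.Ioi (0 : ℝ),
      (excPoly j).eval x * (excPoly j).eval x * exp (-x) * x ^ 7 / (x + 7) ^ 2 := by
    rw [h]
    ring
  rw [normSqL, h', ← integral_div]
  congr 1
  ext x
  rw [excLaguerre_seven_eq]
  ring

lemma lTil_eq (j : Fin 7) (x : ℝ) :
    lTil ((j : ℕ) + 1) x = (excPoly j).eval x / √(excNormSq j) := by
  have hf : (0 : ℝ) < (j : ℕ).factorial := by positivity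
  rw [lTil, normSqL_eq, excLaguerre_seven_eq, sqrt_div (excNormSq_pos j).le, sqrt_sq hf.le,
    div_div_div_cancel_right₀ hf.ne']

/-- The Gram matrix on `(0, T)` of the unnormalized polynomials `excPoly`. -/
noncomputable def excGram (T : ℝ) (j k : Fin 7) : ℝ :=
  (excPrim j k).eval T * (exp (-T) / (T + 7)) + if j = k then excNormSq j else 0

lemma excGram_comm (T : ℝ) (j k : Fin 7) : excGram T j k = excGram T k j := by
  rw [excGram, excGram, excPrim_comm]
  by_cases h : j = k
  · simp [h]
  · simp [h, Ne.symm h]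

lemma MMat_apply {T : ℝ} (hT : 0 < T) (j k : Fin 7) :
    MMat T j k = excGram T j k / (√(excNormSq j) * √(excNormSq k)) := by
  have hderiv : ∀ x ∈ Set.uIcc 0 T, HasDerivAt
      (fun y => (excPrim j k).eval y * exp (-y) / (y + 7))
      ((excPoly j).eval x * (excPoly k).eval x * exp (-x) * x ^ 7 / (x + 7) ^ 2) x := by
    intro x hx
    rw [Set.uIcc_of_le hT.le] at hx
    exact hasDerivAt_excPrim j k hx.1
  have hint : IntervalIntegrable
      (fun x => (excPoly j).eval x * (excPoly k).eval x * exp (-x) * x ^ 7 / (x + 7) ^ 2)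
      volume 0 T := by
    refine ContinuousOn.intervalIntegrable (ContinuousOn.div (by fun_prop) (by fun_prop) ?_)
    intro x hx
    rw [Set.uIcc_of_le hT.le] at hx
    have := hx.1
    positivity
  have h := intervalIntegral.integral_eq_sub_of_hasDerivAt hderiv hint
  have hG : excGram T j k = ∫ x in (0 : ℝ)..T,
      (excPoly j).eval x * (excPoly k).eval x * exp (-x) * x ^ 7 / (x + 7) ^ 2 := by
    rw [h, excPrim_eval_zero, excGram]
    split_ifs <;> simp <;> ring
  rw [hG, ← intervalIntegral.integral_div, MMat]
  congr 1
  ext x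
  rw [lTil_eq, lTil_eq]
  ring

lemma LMat_comm (T : ℝ) (j k : Fin 7) : LMat T j k = LMat T k j := by
  fin_cases j <;> fin_cases k <;> rfl

lemma excLMat_mul_excNormSq (T : ℝ) (j k : Fin 7) :
    excLMat T j k * excNormSq k = excLMat T k j * excNormSq j := by
  fin_cases j <;> fin_cases k <;> simp [excLMat, excNormSq, Nat.factorial] <;> ring

set_option maxHeartbeats 4000000 in
lemma sum_excLMat_mul_excPrim_of_lt (T : ℝ) (j k : Fin 7) (h : j < k) :
    ∑ i, excLMat T j i * (excPrim i k).eval T = ∑ i, excLMat T k i * (excPrim i j).eval T := by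
  fin_cases j <;> fin_cases k <;> first
    | exact absurd h (by decide)
    | (simp [Fin.sum_univ_seven, excLMat]
       simp only [excPrim, excPrimCoeffs, eval_polyOfList, List.foldr_cons, List.foldr_nil]
       ring)

lemma sqrt_excNormSq (j : Fin 7) : √(excNormSq j) =
    ![24 * √2 * √5, 36 * √5 * √7, 240 * √2 * √7, 144 * √3 * √5 * √7 * √11, 8640 * √2 * √7,
      1440 * √2 * √3 * √5 * √7 * √11 * √13, 120960 * √2 * √3 * √5 * √11] j := by
  fin_cases j <;>
    rw [sqrt_eq_iff_mul_self_eq_of_pos (by simp)] <;>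
    simp [excNormSq, Nat.factorial] <;> ring_nf <;> norm_num

set_option maxHeartbeats 1000000 in
lemma LMat_apply_of_le (T : ℝ) (j k : Fin 7) (h : j ≤ k) : LMat T j k =
    excLMat T j k * √(excNormSq k) / (330 * √14 * √(excNormSq j)) := by
  have h14 : √14 = √2 * √7 := by rw [← sqrt_mul (by norm_num)]; norm_num
  have h26 : √26 = √2 * √13 := by rw [← sqrt_mul (by norm_num)]; norm_num
  have h330 : √330 = √2 * √3 * √5 * √11 := by
    rw [← sqrt_mul (by norm_num), ← sqrt_mul (by positivity), ← sqrt_mul (by positivity)]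
    norm_num
  rw [sqrt_excNormSq, sqrt_excNormSq]
  fin_cases j <;> fin_cases k <;> first
    | exact absurd h (by decide)
    | (simp [LMat, excLMat, h14, h26, h330] <;> field_simp <;> ring_nf <;> norm_num <;> ring)

lemma LMat_apply (T : ℝ) (j k : Fin 7) : LMat T j k =
    excLMat T j k * √(excNormSq k) / (330 * √14 * √(excNormSq j)) := by
  rcases le_total j k with h | h
  · exact LMat_apply_of_le T j k h
  · rw [LMat_comm, LMat_apply_of_le T k j h]
    have hj := sqrt_pos.2 (excNormSq_pos j)
    have hk := sqrt_pos.2 (excNormSq_pos k)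
    rw [div_eq_div_iff (by positivity) (by positivity)]
    have h := excLMat_mul_excNormSq T j k
    rw [← mul_self_sqrt (excNormSq_pos j).le, ← mul_self_sqrt (excNormSq_pos k).le] at h
    linear_combination -(330 * √14) * h

lemma sum_excLMat_mul_excGram (T : ℝ) (j k : Fin 7) :
    ∑ i, excLMat T j i * excGram T i k = ∑ i, excLMat T k i * excGram T i j := by
  have hQ : ∑ i, excLMat T j i * (excPrim i k).eval T =
      ∑ i, excLMat T k i * (excPrim i j).eval T := by
    rcases lt_trichotomy j k with h | rfl | h
    · exact sum_excLMat_mul_excPrim_of_lt T j k h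
    · rfl
    · exact (sum_excLMat_mul_excPrim_of_lt T k j h).symm
  simp only [excGram, mul_add, Finset.sum_add_distrib, ← mul_assoc, ← Finset.sum_mul, hQ,
    mul_ite, mul_zero, Finset.sum_ite_eq', Finset.mem_univ, if_true, excLMat_mul_excNormSq T j k]

lemma LMat_mul_MMat_apply {T : ℝ} (hT : 0 < T) (j k : Fin 7) :
    (LMat T * MMat T) j k = (∑ i, excLMat T j i * excGram T i k) /
      (330 * √14 * (√(excNormSq j) * √(excNormSq k))) := by
  rw [Matrix.mul_apply, Finset.sum_div]
  refine Finset.sum_congr rfl fun i _ => ?_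
  have hi := (sqrt_pos.2 (excNormSq_pos i)).ne'
  rw [LMat_apply, MMat_apply hT]
  field_simp

theorem laguerre_commuting_matrix (T : ℝ) (hT : 0 < T) :
    LMat T * MMat T = MMat T * LMat T := by
  have hM : ∀ i k, MMat T i k = MMat T k i := fun i k => by
    rw [MMat_apply hT, MMat_apply hT, excGram_comm, mul_comm √(excNormSq i)]
  ext j k
  have hswap : (MMat T * LMat T) j k = (LMat T * MMat T) k j := by
    simp only [Matrix.mul_apply]
    exact Finset.sum_congr rfl fun i _ => by rw [hM j i, LMat_comm T i k, mul_comm]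
  rw [hswap, LMat_mul_MMat_apply hT, LMat_mul_MMat_apply hT, sum_excLMat_mul_excGram,
    mul_comm √(excNormSq j)]
end
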